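/- The function ℓ ↦ D_{2π/3}(ℓ, ℓ) = arcosh(cosh²ℓ + (1/2)·sinh²ℓ) is strictly convex on [0, ∞). -/

import Mathlib

/-- Inverse hyperbolic cosine. -/
noncomputable def arcosh (x : ℝ) : ℝ := Real.log (x + Real.sqrt (x ^ 2 - 1))

/-- `D θ ℓ ℓ'` is the distance, in the hyperbolic plane of curvature `-1`, between the far
endpoints of two geodesic segments of lengths `ℓ, ℓ'` issuing from a common vertex at
angle `θ`. -/
noncomputable def D (θ ℓ ℓ' : ℝ) : ℝ :=
  arcosh (Real.cosh ℓ * Real.cosh ℓ' - Real.sinh ℓ * Real.sinh ℓ' * Real.cos θ)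

/-!
The bisector of the vertex angle cuts the isosceles triangle into two right triangles, so the
length `d` of its base satisfies `sinh (d / 2) = |sin (θ / 2)| * sinh ℓ`. With
`a = |sin (θ / 2)| ∈ (0, 1)`, half the base is therefore `arsinh (a * sinh ℓ)`, and the square of
its derivative is `1 - (1 - a ^ 2) / (1 + (a * sinh ℓ) ^ 2)`, which increases with `ℓ ≥ 0`.
-/

section ArsinhMulSinh

variable {a : ℝ}

theorem hasDerivAt_arsinh_mul_sinh (a x : ℝ) :
    HasDerivAt (fun t => Real.arsinh (a * Real.sinh t))
      (a * Real.cosh x / √(1 + (a * Real.sinh x) ^ 2)) x := by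
  simpa only [smul_eq_mul, inv_mul_eq_div] using ((Real.hasDerivAt_sinh x).const_mul a).arsinh

theorem mul_cosh_div_sqrt_sq (a x : ℝ) :
    (a * Real.cosh x / √(1 + (a * Real.sinh x) ^ 2)) ^ 2 =
      1 - (1 - a ^ 2) / (1 + (a * Real.sinh x) ^ 2) := by
  have hpos : 0 < 1 + (a * Real.sinh x) ^ 2 := by positivity
  rw [div_pow, Real.sq_sqrt hpos.le, eq_sub_iff_add_eq, ← add_div, div_eq_one_iff_eq hpos.ne',
    mul_pow, Real.cosh_sq]
  ring

theorem strictMonoOn_mul_cosh_div_sqrt (ha₀ : 0 < a) (ha₁ : a < 1) :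
    StrictMonoOn (fun x => a * Real.cosh x / √(1 + (a * Real.sinh x) ^ 2)) (Set.Ici 0) := by
  intro x hx y _ hxy
  have hsinh : 0 ≤ Real.sinh x := Real.sinh_nonneg_iff.2 hx
  have hsinh_lt : Real.sinh x < Real.sinh y := Real.sinh_lt_sinh.2 hxy
  have ha_sq : 0 < 1 - a ^ 2 := sub_pos.2 (pow_lt_one₀ ha₀.le ha₁ two_ne_zero)
  refine lt_of_pow_lt_pow_left₀ 2 (by positivity) ?_
  simp only [mul_cosh_div_sqrt_sq]
  gcongr

theorem strictConvexOn_arsinh_mul_sinh (ha₀ : 0 < a) (ha₁ : a < 1) :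
    StrictConvexOn ℝ (Set.Ici 0) (fun x => Real.arsinh (a * Real.sinh x)) := by
  refine StrictMonoOn.strictConvexOn_of_deriv (convex_Ici 0)
    (fun x _ => (hasDerivAt_arsinh_mul_sinh a x).continuousAt.continuousWithinAt) ?_
  simp only [funext fun x => (hasDerivAt_arsinh_mul_sinh a x).deriv]
  exact (strictMonoOn_mul_cosh_div_sqrt ha₀ ha₁).mono interior_subset

end ArsinhMulSinh

theorem arcosh_eq_real_arcosh : arcosh = Real.arcosh := rfl

theorem arcosh_one_add_two_mul_sq {x : ℝ} (hx : 0 ≤ x) :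
    arcosh (1 + 2 * x ^ 2) = 2 * Real.arsinh x := by
  have hcosh : Real.cosh (2 * Real.arsinh x) = 1 + 2 * x ^ 2 := by
    rw [Real.cosh_two_mul, Real.cosh_sq, Real.sinh_arsinh]
    ring
  rw [arcosh_eq_real_arcosh, ← hcosh,
    Real.arcosh_cosh (mul_nonneg zero_le_two (Real.arsinh_nonneg_iff.2 hx))]

theorem D_self (θ ℓ : ℝ) :
    D θ ℓ ℓ = arcosh (Real.cosh ℓ ^ 2 - Real.cos θ * Real.sinh ℓ ^ 2) := by
  rw [D]
  ring_nf

theorem D_self_eq_two_mul_arsinh (θ : ℝ) {ℓ : ℝ} (hℓ : 0 ≤ ℓ) :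
    D θ ℓ ℓ = 2 * Real.arsinh (|Real.sin (θ / 2)| * Real.sinh ℓ) := by
  have hcos : Real.cos θ = 1 - 2 * Real.sin (θ / 2) ^ 2 := by
    rw [Real.sin_sq_eq_half_sub, mul_div_cancel₀ θ two_ne_zero]
    ring
  rw [D_self, ← arcosh_one_add_two_mul_sq (mul_nonneg (abs_nonneg _) (Real.sinh_nonneg_iff.2 hℓ)),
    mul_pow, sq_abs, Real.cosh_sq, hcos]
  ring_nf

theorem abs_sin_half_pos {θ : ℝ} (hθ : Real.sin θ ≠ 0) : 0 < |Real.sin (θ / 2)| := by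
  refine abs_pos.2 fun hsin => hθ ?_
  rw [← mul_div_cancel₀ θ two_ne_zero, Real.sin_two_mul, hsin, mul_zero, zero_mul]

theorem abs_sin_half_lt_one {θ : ℝ} (hθ : Real.sin θ ≠ 0) : |Real.sin (θ / 2)| < 1 := by
  have hcos : Real.cos (θ / 2) ≠ 0 := fun hcos => hθ <| by
    rw [← mul_div_cancel₀ θ two_ne_zero, Real.sin_two_mul, hcos, mul_zero]
  rw [← sq_lt_one_iff_abs_lt_one, Real.sin_sq]
  exact sub_lt_self 1 (sq_pos_of_ne_zero hcos)

theorem stmt_5_general {θ : ℝ} (hθ : Real.sin θ ≠ 0) :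
    (∀ ℓ : ℝ, D θ ℓ ℓ = arcosh (Real.cosh ℓ ^ 2 - Real.cos θ * Real.sinh ℓ ^ 2)) ∧
    StrictConvexOn ℝ (Set.Ici (0 : ℝ)) (fun ℓ : ℝ => D θ ℓ ℓ) := by
  refine ⟨D_self θ, ?_⟩
  have hconvex := strictConvexOn_arsinh_mul_sinh (abs_sin_half_pos hθ) (abs_sin_half_lt_one hθ)
  refine (hconvex.add hconvex).congr fun ℓ hℓ => ?_
  rw [D_self_eq_two_mul_arsinh θ hℓ, two_mul, Pi.add_apply]

theorem sin_two_pi_div_three_ne_zero : Real.sin (2 * Real.pi / 3) ≠ 0 :=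
  (Real.sin_pos_of_pos_of_lt_pi (by positivity) (by linarith [Real.pi_pos])).ne'

theorem cos_two_pi_div_three : Real.cos (2 * Real.pi / 3) = -(1 / 2) := by
  rw [show 2 * Real.pi / 3 = Real.pi - Real.pi / 3 by ring, Real.cos_pi_sub,
    Real.cos_pi_div_three]

theorem stmt_5 :
    (∀ ℓ : ℝ, D (2 * Real.pi / 3) ℓ ℓ =
      arcosh (Real.cosh ℓ ^ 2 + (1 / 2) * Real.sinh ℓ ^ 2)) ∧
    StrictConvexOn ℝ (Set.Ici (0 : ℝ)) (fun ℓ : ℝ => D (2 * Real.pi / 3) ℓ ℓ) := by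
  simpa only [cos_two_pi_div_three, neg_mul, sub_neg_eq_add] using
    stmt_5_general sin_two_pi_div_three_ne_zero
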